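/- Let L > 0, let N be a positive integer, let Z < 0, and let ω > N²/Z². Define Ψ(x) = √(2ω)·sech(√ω·(x−L) + arctanh(−N/(Z·√ω))) for x ≥ L, where sech t = 1/cosh t. Then N·∫_{L}^{∞} [ (Ψ''(x))² + ω·(Ψ'(x))² − 3·Ψ(x)²·(Ψ'(x))² ] dx = 2·(N²/Z)·ω²·(1 − N²/(Z²·ω))·(1 − 2N²/(Z²·ω)). In particular, if ω > 2N²/Z² then this quantity is strictly negative. -/

import Mathlib

/-!
The profile solves `Ψ'' = ωΨ - Ψ³`, so `φ = Ψ'` lies in the kernel of `-∂² + ω - 3Ψ²` and the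
density `φ'² + (ω - 3Ψ²)φ²` of the quadratic form is the total derivative `(Ψ'Ψ'')'`. It is
eventually nonnegative because `Ψ → 0` and `ω > 0`, hence integrable, and the integral is the
boundary value `-Ψ'(L)Ψ''(L)`. With `t = tanh (arctanh (-N/(Z√ω)))`, this boundary value is a
polynomial in `t` times `ω² √ω`, because `Ψ' = -√ω tanh · Ψ` and `Ψ² = 2ω(1 - tanh²)`; the
condition `N²/Z² < ω` says that `t = -N/(Z√ω)`.
-/

open Set MeasureTheory

/-- The inverse hyperbolic tangent, `arctanh y = (1/2)·log((1+y)/(1−y))`. -/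
noncomputable def arctanh (y : ℝ) : ℝ := (1 / 2) * Real.log ((1 + y) / (1 - y))

/-- The tail-soliton profile
`Ψ(x) = √(2ω)·sech(√ω·(x−L) + arctanh(−N/(Z·√ω)))`, where `sech t = 1/cosh t`. -/
noncomputable def tailProfile (L ω Z : ℝ) (N : ℕ) : ℝ → ℝ := fun x =>
  Real.sqrt (2 * ω) *
    (1 / Real.cosh (Real.sqrt ω * (x - L) + arctanh (-(N : ℝ) / (Z * Real.sqrt ω))))

open Filter Topology

section HalfLine

theorem integrableOn_Ioi_of_hasDerivAt_of_eventually_nonneg {F F' : ℝ → ℝ} {a l : ℝ}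
    (hF : ∀ x ∈ Ici a, HasDerivAt F (F' x) x) (hcont : ContinuousOn F' (Ici a))
    (hnonneg : ∀ᶠ x in atTop, 0 ≤ F' x) (hlim : Tendsto F atTop (𝓝 l)) :
    IntegrableOn F' (Ioi a) := by
  obtain ⟨M, hM⟩ := eventually_atTop.1 hnonneg
  have hcompact : IntegrableOn F' (Icc a (max a M)) :=
    (hcont.mono Icc_subset_Ici_self).integrableOn_Icc
  have htail : IntegrableOn F' (Ioi (max a M)) :=
    integrableOn_Ioi_deriv_of_nonneg'
      (fun x hx => hF x ((le_max_left a M).trans hx))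
      (fun x hx => hM x ((le_max_right a M).trans (le_of_lt hx))) hlim
  rw [← Ioc_union_Ioi_eq_Ioi (le_max_left a M)]
  exact (hcompact.mono_set Ioc_subset_Icc_self).union htail

variable {f f' g g' : ℝ → ℝ} {a b : ℝ}

/- If `f'' = g ∘ f`, then `f'` is a null vector of the linearization `-∂² + g' ∘ f`, so the density
of its quadratic form is `(f' f'')'`. -/
theorem integral_Ioi_sq_add_mul_sq_of_hasDerivAt
    (hf : ∀ x ∈ Ici a, HasDerivAt f (f' x) x) (hf' : ∀ x ∈ Ici a, HasDerivAt f' (g (f x)) x)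
    (hg : ∀ y, HasDerivAt g (g' y) y) (hg' : Continuous g') (hb : 0 < g' b)
    (hf_lim : Tendsto f atTop (𝓝 b)) (hf'_lim : Tendsto f' atTop (𝓝 0)) :
    ∫ x in Ioi a, (g (f x) ^ 2 + g' (f x) * f' x ^ 2) = -(f' a * g (f a)) := by
  have hderiv : ∀ x ∈ Ici a, HasDerivAt (fun x => f' x * g (f x))
      (g (f x) ^ 2 + g' (f x) * f' x ^ 2) x := fun x hx =>
    ((hf' x hx).fun_mul ((hg (f x)).comp x (hf x hx))).congr_deriv
      (by rw [Function.comp_apply]; ring)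
  have hg_cont : Continuous g := continuous_iff_continuousAt.2 fun y => (hg y).continuousAt
  have hf_cont : ContinuousOn f (Ici a) := HasDerivAt.continuousOn hf
  have hf'_cont : ContinuousOn f' (Ici a) := HasDerivAt.continuousOn hf'
  have hcont : ContinuousOn (fun x => g (f x) ^ 2 + g' (f x) * f' x ^ 2) (Ici a) := by
    fun_prop
  have hnonneg : ∀ᶠ x in atTop, 0 ≤ g (f x) ^ 2 + g' (f x) * f' x ^ 2 := by
    filter_upwards [((hg'.tendsto b).comp hf_lim).eventually_const_lt hb] with x hx
    exact add_nonneg (sq_nonneg _) (mul_nonneg (le_of_lt hx) (sq_nonneg _))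
  have hlim : Tendsto (fun x => f' x * g (f x)) atTop (𝓝 0) := by
    simpa only [zero_mul, Function.comp_apply] using hf'_lim.mul ((hg_cont.tendsto b).comp hf_lim)
  rw [integral_Ioi_of_hasDerivAt_of_tendsto' hderiv
    (integrableOn_Ioi_of_hasDerivAt_of_eventually_nonneg hderiv hcont hnonneg hlim) hlim, zero_sub]

end HalfLine

/-- The quadratic form `⟨𝓛₊ φ, φ⟩`, without vertex term, of the linearization
`𝓛₊ = -∂² + ω - 3Ψ²` of the cubic NLS about `Ψ` on the half-line `[L, ∞)`. -/
noncomputable def linearizedForm (ω L : ℝ) (Ψ φ : ℝ → ℝ) : ℝ :=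
  ∫ x in Ioi L, (deriv φ x ^ 2 + ω * φ x ^ 2 - 3 * Ψ x ^ 2 * φ x ^ 2)

theorem linearizedForm_deriv_of_standingWave {Ψ : ℝ → ℝ} {ω : ℝ} (hω : 0 < ω) (L : ℝ)
    (hΨ : Differentiable ℝ Ψ) (hΨ' : ∀ x, HasDerivAt (deriv Ψ) (ω * Ψ x - Ψ x ^ 3) x)
    (hlim : Tendsto Ψ atTop (𝓝 0)) (hlim' : Tendsto (deriv Ψ) atTop (𝓝 0)) :
    linearizedForm ω L Ψ (deriv Ψ) = -(deriv Ψ L * (ω * Ψ L - Ψ L ^ 3)) := by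
  have hg (y : ℝ) : HasDerivAt (fun y => ω * y - y ^ 3) (ω - 3 * y ^ 2) y := by
    simpa using ((hasDerivAt_id y).const_mul ω).fun_sub (hasDerivAt_pow 3 y)
  rw [← integral_Ioi_sq_add_mul_sq_of_hasDerivAt (fun x _ => (hΨ x).hasDerivAt)
    (fun x _ => hΨ' x) hg (by fun_prop) (by simpa using hω) hlim hlim', linearizedForm]
  congr with x
  rw [(hΨ' x).deriv]
  ring

theorem tendsto_cosh_atTop : Tendsto Real.cosh atTop atTop :=
  tendsto_atTop_mono (fun x => (Real.sinh_lt_cosh x).le) Real.sinhOrderIso.tendsto_atTop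

theorem hasDerivAt_tanh (x : ℝ) : HasDerivAt Real.tanh (1 - Real.tanh x ^ 2) x := by
  have hcosh := (Real.cosh_pos x).ne'
  rw [funext Real.tanh_eq_sinh_div_cosh]
  refine ((Real.hasDerivAt_sinh x).div (Real.hasDerivAt_cosh x) hcosh).congr_deriv ?_
  field_simp

/-- The bright soliton of frequency `ω`, the homoclinic solution of `Ψ'' = ωΨ - Ψ³`, with the
translation encoded as a phase `θ` inside `sech`. -/
noncomputable def soliton (ω θ : ℝ) : ℝ → ℝ := fun x =>
  √(2 * ω) * (1 / Real.cosh (√ω * x + θ))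

section Soliton

variable {ω : ℝ} (θ x : ℝ)

theorem soliton_sq (hω : 0 ≤ ω) :
    soliton ω θ x ^ 2 = 2 * ω * (1 - Real.tanh (√ω * x + θ) ^ 2) := by
  have hcosh := (Real.cosh_pos (√ω * x + θ)).ne'
  rw [soliton, mul_pow, Real.sq_sqrt (by positivity), Real.tanh_eq_sinh_div_cosh]
  field_simp
  rw [Real.cosh_sq_sub_sinh_sq, mul_one]

theorem hasDerivAt_soliton (ω : ℝ) :
    HasDerivAt (soliton ω θ) (-(√ω * Real.tanh (√ω * x + θ) * soliton ω θ x)) x := by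
  have hcosh := (Real.cosh_pos (√ω * x + θ)).ne'
  unfold soliton
  simp only [one_div]
  have hphase : HasDerivAt (fun x => √ω * x + θ) √ω x := (hasDerivAt_const_mul √ω).add_const θ
  refine ((hphase.cosh.inv hcosh).const_mul √(2 * ω)).congr_deriv ?_
  rw [Real.tanh_eq_sinh_div_cosh]
  field_simp

theorem deriv_soliton (ω : ℝ) :
    deriv (soliton ω θ) = fun x => -(√ω * Real.tanh (√ω * x + θ) * soliton ω θ x) :=
  funext fun x => (hasDerivAt_soliton θ x ω).deriv

theorem hasDerivAt_deriv_soliton (hω : 0 ≤ ω) :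
    HasDerivAt (deriv (soliton ω θ)) (ω * soliton ω θ x - soliton ω θ x ^ 3) x := by
  have htanh := (hasDerivAt_tanh (√ω * x + θ)).comp x ((hasDerivAt_const_mul √ω).add_const θ)
  rw [deriv_soliton]
  refine ((htanh.const_mul √ω).mul (hasDerivAt_soliton θ x ω)).neg.congr_deriv ?_
  rw [Function.comp_apply]
  linear_combination soliton ω θ x * soliton_sq θ x hω +
    soliton ω θ x * (2 * Real.tanh (√ω * x + θ) ^ 2 - 1) * Real.sq_sqrt hω

theorem tendsto_soliton_atTop (hω : 0 < ω) : Tendsto (soliton ω θ) atTop (𝓝 0) := by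
  have hphase : Tendsto (fun x => √ω * x + θ) atTop atTop :=
    tendsto_atTop_add_const_right _ θ (tendsto_id.const_mul_atTop (Real.sqrt_pos.2 hω))
  unfold soliton
  simpa only [one_div, mul_zero, Function.comp_apply] using
    (tendsto_inv_atTop_zero.comp (tendsto_cosh_atTop.comp hphase)).const_mul √(2 * ω)

theorem tendsto_deriv_soliton_atTop (hω : 0 < ω) :
    Tendsto (deriv (soliton ω θ)) atTop (𝓝 0) := by
  have htanh : ∀ᶠ x in atTop, |Real.tanh (√ω * x + θ)| ≤ 1 :=
    Eventually.of_forall fun x => (Real.abs_tanh_lt_one _).le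
  have hprod := bdd_le_mul_tendsto_zero' 1 htanh (tendsto_soliton_atTop θ hω)
  simpa only [deriv_soliton, mul_assoc, mul_zero, neg_zero] using (hprod.const_mul √ω).neg

theorem linearizedForm_deriv_soliton (hω : 0 < ω) (L : ℝ) :
    linearizedForm ω L (soliton ω θ) (deriv (soliton ω θ)) =
      2 * ω ^ 2 * (√ω * Real.tanh (√ω * L + θ)) * (1 - Real.tanh (√ω * L + θ) ^ 2) *
        (2 * Real.tanh (√ω * L + θ) ^ 2 - 1) := by
  rw [linearizedForm_deriv_of_standingWave hω L
    (fun x => (hasDerivAt_soliton θ x ω).differentiableAt)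
    (fun x => hasDerivAt_deriv_soliton θ x hω.le)
    (tendsto_soliton_atTop θ hω) (tendsto_deriv_soliton_atTop θ hω), deriv_soliton]
  calc _ = √ω * Real.tanh (√ω * L + θ) * soliton ω θ L ^ 2 * (ω - soliton ω θ L ^ 2) := by ring
    _ = _ := by rw [soliton_sq θ L hω.le]; ring

end Soliton

theorem tanh_arctanh {y : ℝ} (hy : |y| < 1) : Real.tanh (arctanh y) = y := by
  have hmem : y ∈ Ioo (-1) 1 := abs_lt.1 hy
  rw [arctanh, ← Real.artanh_eq_half_log (Ioo_subset_Icc_self hmem), Real.tanh_artanh hmem]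

theorem tailProfile_eq_soliton (L ω Z : ℝ) (N : ℕ) :
    tailProfile L ω Z N = soliton ω (arctanh (-N / (Z * √ω)) - √ω * L) := by
  funext x
  rw [tailProfile, soliton]
  ring_nf

theorem sq_neg_div_mul_sqrt {ω : ℝ} (hω : 0 ≤ ω) (r z : ℝ) :
    (-r / (z * √ω)) ^ 2 = r ^ 2 / (z ^ 2 * ω) := by
  rw [div_pow, neg_sq, mul_pow, Real.sq_sqrt hω]

theorem div_mul_lt_one_iff {ω : ℝ} (hω : 0 < ω) (r s : ℝ) : r / (s * ω) < 1 ↔ r / s < ω := by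
  rw [← div_div, div_lt_one hω]

theorem linearizedForm_deriv_tailProfile (L : ℝ) {N : ℕ} {Z ω : ℝ}
    (hω : (N : ℝ) ^ 2 / Z ^ 2 < ω) :
    N * linearizedForm ω L (tailProfile L ω Z N) (deriv (tailProfile L ω Z N)) =
      2 * ((N : ℝ) ^ 2 / Z) * ω ^ 2 * (1 - (N : ℝ) ^ 2 / (Z ^ 2 * ω)) *
        (1 - 2 * (N : ℝ) ^ 2 / (Z ^ 2 * ω)) := by
  have hω_pos : 0 < ω := lt_of_le_of_lt (by positivity) hω
  have hsq := sq_neg_div_mul_sqrt hω_pos.le N Z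
  have hvertex : |-N / (Z * √ω)| < 1 := by
    rwa [← sq_lt_one_iff_abs_lt_one, hsq, div_mul_lt_one_iff hω_pos]
  have hslope : √ω * (-N / (Z * √ω)) = -(N / Z) := by
    have := (Real.sqrt_pos.2 hω_pos).ne'
    field_simp
  rw [tailProfile_eq_soliton, linearizedForm_deriv_soliton _ hω_pos, add_sub_cancel,
    tanh_arctanh hvertex, hslope, hsq]
  ring

theorem tailProfile_quadratic_form_value_general (L : ℝ) {N : ℕ} (hN : 1 ≤ N) {Z : ℝ}
    (hZ : Z ≠ 0) {ω : ℝ} (hω : (N : ℝ) ^ 2 / Z ^ 2 < ω) :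
    N * linearizedForm ω L (tailProfile L ω Z N) (deriv (tailProfile L ω Z N)) =
      2 * ((N : ℝ) ^ 2 / Z) * ω ^ 2 * (1 - (N : ℝ) ^ 2 / (Z ^ 2 * ω)) *
        (1 - 2 * (N : ℝ) ^ 2 / (Z ^ 2 * ω)) ∧
    (2 * (N : ℝ) ^ 2 / Z ^ 2 < ω →
      SignType.sign
        (N * linearizedForm ω L (tailProfile L ω Z N) (deriv (tailProfile L ω Z N))) =
          SignType.sign Z) := by
  have hω_pos : 0 < ω := lt_of_le_of_lt (by positivity) hω
  have hvalue := linearizedForm_deriv_tailProfile L hω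
  refine ⟨hvalue, fun hω₂ => ?_⟩
  have h₁ : 0 < 1 - (N : ℝ) ^ 2 / (Z ^ 2 * ω) :=
    sub_pos.2 ((div_mul_lt_one_iff hω_pos _ _).2 hω)
  have h₂ : 0 < 1 - 2 * (N : ℝ) ^ 2 / (Z ^ 2 * ω) :=
    sub_pos.2 ((div_mul_lt_one_iff hω_pos _ _).2 hω₂)
  have hsq_pos : 0 < ((N : ℝ) / Z) ^ 2 :=
    sq_pos_of_ne_zero (div_ne_zero (Nat.cast_ne_zero.2 (Nat.one_le_iff_ne_zero.1 hN)) hZ)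
  have hdiv : (N : ℝ) ^ 2 / Z = (N / Z) ^ 2 * Z := by
    field_simp
  simp only [hvalue, hdiv, sign_mul, sign_pos two_pos, sign_pos hsq_pos,
    sign_pos (pow_pos hω_pos 2), sign_pos h₁, sign_pos h₂, one_mul, mul_one]

/-- For `L > 0`, `N ≥ 1`, `Z < 0` and `ω > N²/Z²`, the quadratic-form
value
`N·∫_L^∞ [(Ψ'')² + ω(Ψ')² − 3Ψ²(Ψ')²] dx = 2(N²/Z)ω²(1 − N²/(Z²ω))(1 − 2N²/(Z²ω))`;
in particular this quantity is strictly negative when `ω > 2N²/Z²`. -/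
theorem tailProfile_quadratic_form_value
    (L : ℝ) (hL : 0 < L) (N : ℕ) (hN : 1 ≤ N)
    (Z : ℝ) (hZ : Z < 0) (ω : ℝ) (hω : (N : ℝ) ^ 2 / Z ^ 2 < ω) :
    (N : ℝ) * ∫ x in Ioi L,
        ((deriv (deriv (tailProfile L ω Z N)) x) ^ 2
          + ω * (deriv (tailProfile L ω Z N) x) ^ 2
          - 3 * (tailProfile L ω Z N x) ^ 2 * (deriv (tailProfile L ω Z N) x) ^ 2)
      = 2 * ((N : ℝ) ^ 2 / Z) * ω ^ 2 * (1 - (N : ℝ) ^ 2 / (Z ^ 2 * ω))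
          * (1 - 2 * (N : ℝ) ^ 2 / (Z ^ 2 * ω)) ∧
    (2 * (N : ℝ) ^ 2 / Z ^ 2 < ω →
      (N : ℝ) * ∫ x in Ioi L,
        ((deriv (deriv (tailProfile L ω Z N)) x) ^ 2
          + ω * (deriv (tailProfile L ω Z N) x) ^ 2
          - 3 * (tailProfile L ω Z N x) ^ 2 * (deriv (tailProfile L ω Z N) x) ^ 2)
        < 0) :=
  (tailProfile_quadratic_form_value_general L hN hZ.ne hω).imp_right fun hsign hω₂ =>
    sign_eq_neg_one_iff.1 ((hsign hω₂).trans (sign_neg hZ))
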